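/- Let Σ_xx be an N×N diagonal matrix with positive diagonal entries σ_{x,1}², …, σ_{x,N}², and let Σ_ww be an M×M diagonal matrix with positive diagonal entries σ_{w,1}², …, σ_{w,M}², where M ≤ N. For any real M×N matrix A satisfying A Aᵀ = I_M, there exists a partial permutation matrix P̃ ∈ {0,1}^{M×N} such that Tr((Σ_xx⁻¹ + Aᵀ Σ_ww⁻¹ A)⁻¹) ≥ Tr((Σ_xx⁻¹ + P̃ᵀ Σ_ww⁻¹ P̃)⁻¹). -/

import Mathlib

open Matrix BigOperators
theorem contAt {T : Type*} [TopologicalSpace T] {N : ℕ} (X : T → Matrix (Fin N) (Fin N) ℝ) (t : T)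
    (hX : Continuous X) (h : (X t).det ≠ 0) : ContinuousAt (fun s => ((X s)⁻¹).trace) t := by
  have : (fun s => ((X s)⁻¹).trace) = fun s => ((X s).det)⁻¹ * ((X s).adjugate).trace := by
    funext s
    rw [Matrix.inv_def, Ring.inverse_eq_inv', trace_smul, smul_eq_mul]
  rw [this]
  exact (hX.matrix_det.continuousAt.inv₀ h).mul (hX.matrix_adjugate.matrix_trace.continuousAt)

theorem posX {N M : ℕ} (d : Fin N → ℝ) (hd : ∀ n, 0 < d n) (w : Fin M → ℝ) (hw : ∀ n, 0 < w n)
   (A : Matrix (Fin M) (Fin N) ℝ) : (diagonal d + Aᵀ * diagonal w * A).PosDef := by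
  refine (PosDef.diagonal hd).add_posSemidef ?_
  have := (PosSemidef.diagonal (fun n => (hw n).le)).conjTranspose_mul_mul_same A
  simpa using this

theorem anticomm {N : ℕ} (X Z : Matrix (Fin N) (Fin N) ℝ) (hX : X.PosDef) (h : X * Z + Z * X = 0) : Z = 0 := by
  have h1 := (hX.posSemidef.conjTranspose_mul_mul_same Z).trace_nonneg
  have h2 := (hX.posSemidef.mul_mul_conjTranspose_same Z).trace_nonneg
  have h3 : (Zᴴ * X * Z).trace + (Z * X * Zᴴ).trace = 0 := by
    rw [Matrix.trace_mul_comm (Z*X), ← trace_add, Matrix.mul_assoc, ← Matrix.mul_add, h]; simp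
  have h4 : (Zᴴ * X * Z).trace = 0 := by linarith
  rw [(hX.posSemidef.conjTranspose_mul_mul_same Z).trace_eq_zero_iff] at h4
  ext i j
  have h5 := congrFun (congrFun h4 j) j
  by_contra hne
  have h6 := hX.dotProduct_mulVec_pos (x := fun i => Z i j) (fun h => hne (congrFun h i))
  have : (Zᴴ * X * Z) j j = star (fun i => Z i j) ⬝ᵥ X *ᵥ (fun i => Z i j) := by
    rw [Matrix.mul_assoc]; rfl
  rw [← this, h5] at h6
  simp at h6

section
attribute [local instance] Matrix.linftyOpNormedRing Matrix.linftyOpNormedAlgebra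
theorem deriv0 {N : ℕ} (D B K : Matrix (Fin N) (Fin N) ℝ) (hX : (D + B).PosDef) :
   HasDerivAt (fun t : ℝ => ((D + (NormedSpace.exp (t • K))ᵀ * B * NormedSpace.exp (t • K))⁻¹).trace)
    (-((D+B)⁻¹ * (Kᵀ * B + B * K) * (D+B)⁻¹).trace) 0 := by
  have h1 : HasDerivAt (fun t : ℝ => NormedSpace.exp (t • K)) K 0 := by
    have := hasDerivAt_exp_smul_const (𝕂 := ℝ) K (0:ℝ)
    simp only [zero_smul, NormedSpace.exp_zero, one_mul] at this
    exact this
  have h2 : HasDerivAt (fun t : ℝ => (NormedSpace.exp (t • K))ᵀ) Kᵀ 0 := by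
    have := hasDerivAt_exp_smul_const (𝕂 := ℝ) Kᵀ (0:ℝ)
    simp only [← Matrix.exp_transpose, transpose_smul]
    simp only [zero_smul, NormedSpace.exp_zero, one_mul] at this
    exact this
  have h3 := ((h2.mul_const B).mul h1).const_add D
  simp only [zero_smul, NormedSpace.exp_zero, transpose_one, Matrix.mul_one, Matrix.one_mul] at h3
  obtain ⟨u, hu⟩ := hX.isUnit
  have h4 := hasFDerivAt_ringInverse (𝕜 := ℝ) u
  have h5 := HasFDerivAt.comp_hasDerivAt_of_eq (0:ℝ) h4 h3 (by simp [hu])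
  have h6 := ((Matrix.traceLinearMap (Fin N) ℝ ℝ).toContinuousLinearMap.hasFDerivAt).comp_hasDerivAt (0:ℝ) h5
  have hu' : (↑u⁻¹ : Matrix (Fin N) (Fin N) ℝ) = (D+B)⁻¹ := by
    rw [← hu, Matrix.coe_units_inv]
  simp only [Function.comp_def, ← Matrix.nonsing_inv_eq_ringInverse, hu'] at h6
  rw [← trace_neg]
  exact h6

theorem orthExp {N : ℕ} (K : Matrix (Fin N) (Fin N) ℝ) (hK : Kᵀ = -K) (t : ℝ) :
    NormedSpace.exp (t • K) * (NormedSpace.exp (t • K))ᵀ = 1 := by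
  rw [← Matrix.exp_transpose, transpose_smul, hK, smul_neg, Matrix.exp_neg]
  exact Matrix.mul_nonsing_inv _ ((Matrix.isUnit_iff_isUnit_det _).1 (Matrix.isUnit_exp _))
end

/-- At a minimizer with distinct `d`, the matrix `Aᵀ W A` is diagonal. -/
theorem minDiag {N M : ℕ} (d : Fin N → ℝ) (hd : ∀ n, 0 < d n) (hdi : Function.Injective d)
    (w : Fin M → ℝ) (hw : ∀ n, 0 < w n)
    (A : Matrix (Fin M) (Fin N) ℝ) (hA : A * Aᵀ = 1)
    (hmin : ∀ A' : Matrix (Fin M) (Fin N) ℝ, A' * A'ᵀ = 1 →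
      ((diagonal d + Aᵀ * diagonal w * A)⁻¹).trace ≤ ((diagonal d + A'ᵀ * diagonal w * A')⁻¹).trace)
    (j k : Fin N) (hjk : j ≠ k) : (Aᵀ * diagonal w * A) j k = 0 := by
  have hX := posX d hd w hw A
  set B := Aᵀ * diagonal w * A with hB
  set D := diagonal d with hD
  set X := D + B with hXdef
  have hBt : Bᵀ = B := by
    rw [hB]; simp [Matrix.transpose_mul, Matrix.mul_assoc]
  have hXt : Xᵀ = X := by rw [hXdef, transpose_add, hBt, hD, diagonal_transpose]
  have hYt : (X⁻¹)ᵀ = X⁻¹ := by rw [transpose_nonsing_inv, hXt]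
  set Y := X⁻¹ with hY
  have hdet : IsUnit X.det := (Matrix.isUnit_iff_isUnit_det _).1 hX.isUnit
  have hXY : X * Y = 1 := Matrix.mul_nonsing_inv _ hdet
  have hYX : Y * X = 1 := Matrix.nonsing_inv_mul _ hdet
  set C := Y * Y * B - B * (Y * Y) with hC
  have hCt : Cᵀ = -C := by
    rw [hC]; simp [Matrix.transpose_mul, hBt, hYt, Matrix.mul_assoc]
  have hK : (Cᵀ)ᵀ = -Cᵀ := by rw [hCt, transpose_neg, hCt]
  have hder := deriv0 D B Cᵀ hX
  have hlm : IsLocalMin (fun t : ℝ => ((D + (NormedSpace.exp (t • Cᵀ))ᵀ * B * NormedSpace.exp (t • Cᵀ))⁻¹).trace) 0 := by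
    refine Filter.Eventually.of_forall fun t => ?_
    have h := hmin (A * NormedSpace.exp (t • Cᵀ)) (by
      rw [Matrix.transpose_mul, Matrix.mul_assoc, ← Matrix.mul_assoc _ _ Aᵀ, orthExp _ hK,
        Matrix.one_mul, hA])
    simp only [Matrix.transpose_mul] at h
    simp only [zero_smul, NormedSpace.exp_zero, transpose_one, Matrix.mul_one, Matrix.one_mul]
    refine h.trans_eq ?_
    simp only [hB, Matrix.mul_assoc]
  have h0 := hlm.hasDerivAt_eq_zero hder
  have h1 : (C * Cᵀ).trace = 0 := by
    have e : (Y * (Cᵀᵀ * B + B * Cᵀ) * Y).trace = (C * Cᵀ).trace := by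
      have e1 : C * Cᵀ = Y * Y * B * Cᵀ - B * (Y * Y) * Cᵀ := by
        rw [← Matrix.sub_mul]
      rw [hK, Matrix.trace_mul_cycle, e1, trace_sub, Matrix.mul_add, trace_add, Matrix.neg_mul,
        Matrix.mul_neg, trace_neg, ← Matrix.trace_mul_cycle (Y * Y) Cᵀ B,
        ← Matrix.mul_assoc (Y * Y), ← Matrix.mul_assoc (Y * Y)]
      ring
    rw [← e]
    linarith
  have hC0 : C = 0 := by
    have := (Matrix.trace_mul_conjTranspose_self_eq_zero_iff (A := C))
    simp only [conjTranspose_eq_transpose_of_trivial] at this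
    exact this.1 h1
  have hYYB : Y * Y * B = B * (Y * Y) := sub_eq_zero.1 (hC ▸ hC0)
  have hXXB : X * X * B = B * (X * X) := by
    have e1 : X * X * (Y * Y) = 1 := by
      rw [Matrix.mul_assoc, ← Matrix.mul_assoc X Y Y, hXY, Matrix.one_mul, hXY]
    have e2 : Y * Y * (X * X) = 1 := by
      rw [Matrix.mul_assoc, ← Matrix.mul_assoc Y X X, hYX, Matrix.one_mul, hYX]
    calc X * X * B = X * X * (B * (Y * Y)) * (X * X) := by
          rw [Matrix.mul_assoc (X * X), Matrix.mul_assoc B, e2, Matrix.mul_one]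
      _ = B * (X * X) := by
          rw [← hYYB, ← Matrix.mul_assoc (X * X) (Y * Y) B, e1, Matrix.one_mul]
  have hZ : X * B - B * X = 0 := by
    refine anticomm X _ hX ?_
    have : X * (X * B - B * X) + (X * B - B * X) * X = X * X * B - B * (X * X) := by
      noncomm_ring
    rw [this, hXXB, sub_self]
  have hDB : D * B = B * D := by
    have : X * B - B * X = D * B - B * D := by rw [hXdef]; noncomm_ring
    rw [this] at hZ
    exact sub_eq_zero.1 hZ
  have := congrFun (congrFun hDB j) k
  rw [hD, diagonal_mul, mul_diagonal] at this
  have h2 : (d j - d k) * B j k = 0 := by linarith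
  rcases mul_eq_zero.1 h2 with h | h
  · exact absurd (hdi (sub_eq_zero.1 h)) hjk
  · exact h

def permMat {N M : ℕ} (f : Fin M → Fin N) : Matrix (Fin M) (Fin N) ℝ :=
  Matrix.of fun i j => if f i = j then 1 else 0

theorem permMat_orth {N M : ℕ} (f : Fin M → Fin N) (hf : Function.Injective f) :
    permMat f * (permMat f)ᵀ = 1 := by
  ext i j
  simp [permMat, Matrix.mul_apply, Matrix.one_apply, hf.eq_iff, eq_comm]

theorem entryB {N M : ℕ} (w : Fin M → ℝ) (A : Matrix (Fin M) (Fin N) ℝ) (j k : Fin N) :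
    (Aᵀ * diagonal w * A) j k = ∑ i, A i j * w i * A i k := by
  rw [Matrix.mul_apply]
  simp only [Matrix.mul_diagonal, transpose_apply]

theorem diagPerm {N M : ℕ} (w : Fin M → ℝ) (hw : ∀ n, 0 < w n) (hwi : Function.Injective w)
    (A : Matrix (Fin M) (Fin N) ℝ) (hA : A * Aᵀ = 1)
    (hdiag : ∀ j k : Fin N, j ≠ k → (Aᵀ * diagonal w * A) j k = 0) :
    ∃ f : Fin M → Fin N, Function.Injective f ∧
      (permMat f)ᵀ * diagonal w * permMat f = Aᵀ * diagonal w * A := by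
  set B := Aᵀ * diagonal w * A with hB
  have hBd : B = diagonal (fun j => B j j) := by
    ext j k
    by_cases h : j = k
    · subst h; simp
    · rw [diagonal_apply_ne _ h, hdiag j k h]
  have hAB : A * B = diagonal w * A := by
    rw [hB, ← Matrix.mul_assoc, ← Matrix.mul_assoc, hA, Matrix.one_mul]
  have hval : ∀ i j, A i j ≠ 0 → w i = B j j := by
    intro i j h
    have := congrFun (congrFun hAB i) j
    rw [hBd, mul_diagonal, diagonal_mul] at this
    have h2 : (w i - B j j) * A i j = 0 := by linarith
    rcases mul_eq_zero.1 h2 with h3 | h3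
    · linarith
    · exact absurd h3 h
  have hex : ∀ i, ∃ j, A i j ≠ 0 := by
    intro i
    by_contra hc
    push Not at hc
    have := congrFun (congrFun hA i) i
    simp [Matrix.mul_apply, hc] at this
  choose f hf using hex
  have hcol : ∀ i i' j, A i j ≠ 0 → A i' j ≠ 0 → i = i' := fun i i' j h h' =>
    hwi ((hval i j h).trans (hval i' j h').symm)
  have hfi : Function.Injective f := fun i i' h => hcol i i' (f i) (hf i) (h ▸ hf i')
  have hrow : ∀ i j, A i j ≠ 0 → j = f i := by
    intro i j h
    by_contra hne
    have h1 := hdiag j (f i) hne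
    rw [hB, entryB, Finset.sum_eq_single i] at h1
    · exact (mul_ne_zero (mul_ne_zero h (hw i).ne') (hf i)) h1
    · intro i' _ hi'
      by_cases h3 : A i' (f i) = 0
      · simp [h3]
      · exact absurd (hcol i' i (f i) h3 (hf i)) hi'
    · simp
  refine ⟨f, hfi, ?_⟩
  ext j k
  rw [entryB]
  by_cases h : j = k
  · subst h
    by_cases hj : ∃ i, f i = j
    · obtain ⟨i, rfl⟩ := hj
      rw [← hval i (f i) (hf i)]
      simp [permMat, hfi.eq_iff]
    · push Not at hj
      have : ∀ i, A i j = 0 := fun i => by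
        by_contra hc
        exact hj i (hrow i j hc).symm
      rw [hB, entryB]
      simp [this, permMat, hj]
  · rw [hdiag j k h]
    refine Finset.sum_eq_zero fun i _ => ?_
    simp only [permMat, of_apply]
    by_cases h1 : f i = j
    · have : f i ≠ k := fun h2 => h (h1.symm.trans h2)
      simp [this]
    · simp [h1]

theorem compactA (N M : ℕ) : IsCompact {A : Matrix (Fin M) (Fin N) ℝ | A * Aᵀ = 1} := by
  have hc : IsCompact (Set.univ.pi fun _ : Fin M => Set.univ.pi fun _ : Fin N => Set.Icc (-1:ℝ) 1) :=
    isCompact_univ_pi fun _ => isCompact_univ_pi fun _ => isCompact_Icc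
  refine IsCompact.of_isClosed_subset (X := Matrix (Fin M) (Fin N) ℝ) hc ?_ ?_
  · exact isClosed_eq (by fun_prop) continuous_const
  · intro A hA i _ j _
    have h := congrFun (congrFun hA i) i
    rw [Matrix.mul_apply, Matrix.one_apply_eq] at h
    have h2 : A i j * A i j ≤ ∑ k, A i k * A i k :=
      Finset.single_le_sum (f := fun k => A i k * A i k) (fun k _ => mul_self_nonneg _) (Finset.mem_univ j)
    simp only [transpose_apply] at h
    rw [h] at h2
    exact abs_le.1 (abs_le_one_iff_mul_self_le_one.2 h2)

theorem distinctCase {N M : ℕ} (d : Fin N → ℝ) (hd : ∀ n, 0 < d n) (hdi : Function.Injective d)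
    (w : Fin M → ℝ) (hw : ∀ n, 0 < w n) (hwi : Function.Injective w)
    (A : Matrix (Fin M) (Fin N) ℝ) (hA : A * Aᵀ = 1) :
    ∃ f : Fin M → Fin N, Function.Injective f ∧
     ((diagonal d + (permMat f)ᵀ * diagonal w * permMat f)⁻¹).trace ≤
      ((diagonal d + Aᵀ * diagonal w * A)⁻¹).trace := by
  obtain ⟨A0, hA0, hmin⟩ := (compactA N M).exists_isMinOn ⟨A, hA⟩
    (f := fun A => ((diagonal d + Aᵀ * diagonal w * A)⁻¹).trace) (fun A' _ =>
      (contAt (fun A : Matrix (Fin M) (Fin N) ℝ => diagonal d + Aᵀ * diagonal w * A) A'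
        (by fun_prop) (posX d hd w hw A').det_pos.ne').continuousWithinAt)
  obtain ⟨f, hf, hfe⟩ := diagPerm w hw hwi A0 hA0
    (minDiag d hd hdi w hw A0 hA0 (fun A' hA' => hmin hA'))
  exact ⟨f, hf, by rw [hfe]; exact hmin hA⟩

theorem evInj {n : ℕ} (d : Fin n → ℝ) :
    ∀ᶠ e : ℝ in nhdsWithin 0 (Set.Ioi 0), Function.Injective fun i => d i + e * (i : ℕ) := by
  have : ∀ i j : Fin n, ∀ᶠ e : ℝ in nhdsWithin 0 (Set.Ioi 0),
      d i + e * (i : ℕ) = d j + e * (j : ℕ) → i = j := by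
    intro i j
    by_cases h : d i = d j
    · filter_upwards [self_mem_nhdsWithin] with e he h1
      have h2 : e * (i : ℕ) = e * (j : ℕ) := by linarith
      have h3 := mul_left_cancel₀ (ne_of_gt he) h2
      exact Fin.ext (by exact_mod_cast h3)
    · have hc : ContinuousAt (fun e : ℝ => (d i + e * (i : ℕ)) - (d j + e * (j : ℕ))) 0 := by fun_prop
      have := hc.eventually_ne (y := 0) (by simpa [sub_eq_zero] using h)
      filter_upwards [nhdsWithin_le_nhds this] with e he h1
      exact absurd (sub_eq_zero.2 h1) he
  filter_upwards [Filter.eventually_all.2 fun i => Filter.eventually_all.2 (this i)] with e he i j h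
  exact he i j h

theorem generalCase {N M : ℕ} (d : Fin N → ℝ) (hd : ∀ n, 0 < d n)
    (w : Fin M → ℝ) (hw : ∀ n, 0 < w n)
    (A : Matrix (Fin M) (Fin N) ℝ) (hA : A * Aᵀ = 1) :
    ∃ f : Fin M → Fin N, Function.Injective f ∧
     ((diagonal d + (permMat f)ᵀ * diagonal w * permMat f)⁻¹).trace ≤
      ((diagonal d + Aᵀ * diagonal w * A)⁻¹).trace := by
  by_contra hcon
  push Not at hcon
  have hc : ∀ A : Matrix (Fin M) (Fin N) ℝ, ContinuousAt (fun e : ℝ =>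
      ((diagonal (fun i => d i + e * (i : ℕ)) + Aᵀ * diagonal (fun i => w i + e * (i : ℕ)) * A)⁻¹).trace) 0 := by
    intro A
    refine contAt (fun e : ℝ => diagonal (fun i => d i + e * (i : ℕ)) +
      Aᵀ * diagonal (fun i => w i + e * (i : ℕ)) * A) 0 (by fun_prop) ?_
    simpa using (posX d hd w hw A).det_pos.ne'
  have hev : ∀ f : Fin M → Fin N, ∀ᶠ e : ℝ in nhdsWithin 0 (Set.Ioi 0), Function.Injective f →
      ((diagonal (fun i => d i + e * (i : ℕ)) + Aᵀ * diagonal (fun i => w i + e * (i : ℕ)) * A)⁻¹).trace <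
      ((diagonal (fun i => d i + e * (i : ℕ)) +
        (permMat f)ᵀ * diagonal (fun i => w i + e * (i : ℕ)) * permMat f)⁻¹).trace := by
    intro f
    by_cases hf : Function.Injective f
    · have := (hc A).eventually_lt (hc (permMat f)) (by simpa using hcon f hf)
      filter_upwards [nhdsWithin_le_nhds this] with e he _
      exact he
    · exact Filter.Eventually.of_forall fun e h => absurd h hf
  obtain ⟨e, h1, h2, h3, h4⟩ := ((Filter.eventually_all.2 hev).and ((evInj d).and ((evInj w).and
    self_mem_nhdsWithin))).exists
  have h4 : 0 < e := h4
  obtain ⟨f, hf, hle⟩ := distinctCase _ (fun n => by have := hd n; positivity) h2 _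
    (fun n => by have := hw n; positivity) h3 A hA
  exact absurd hle (not_le.2 (h1 f hf))



/-- For any real M×N matrix A with A Aᵀ = I_M, there exists a partial
permutation matrix P̃ (binary entries, P̃ P̃ᵀ = I_M) such that
Tr((Σ_xx⁻¹ + Aᵀ Σ_ww⁻¹ A)⁻¹) ≥ Tr((Σ_xx⁻¹ + P̃ᵀ Σ_ww⁻¹ P̃)⁻¹). -/
theorem stmt_0 {N M : ℕ} (hMN : M ≤ N)
    (σx : Fin N → ℝ) (hσx : ∀ n, 0 < σx n)
    (σw : Fin M → ℝ) (hσw : ∀ m, 0 < σw m)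
    (A : Matrix (Fin M) (Fin N) ℝ) (hA : A * Aᵀ = 1) :
    ∃ P : Matrix (Fin M) (Fin N) ℝ,
      (∀ i j, P i j = 0 ∨ P i j = 1) ∧ P * Pᵀ = 1 ∧
      Matrix.trace (((Matrix.diagonal σx)⁻¹ + Aᵀ * (Matrix.diagonal σw)⁻¹ * A)⁻¹) ≥
        Matrix.trace (((Matrix.diagonal σx)⁻¹ + Pᵀ * (Matrix.diagonal σw)⁻¹ * P)⁻¹) := by
  have hinv : ∀ {n : ℕ} (s : Fin n → ℝ), (∀ i, 0 < s i) →
      (Matrix.diagonal s)⁻¹ = Matrix.diagonal (fun i => (s i)⁻¹) := by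
    intro n s hs
    refine Matrix.inv_eq_right_inv ?_
    rw [Matrix.diagonal_mul_diagonal, ← Matrix.diagonal_one]
    congr 1
    funext i
    exact mul_inv_cancel₀ (hs i).ne'
  rw [hinv σx hσx, hinv σw hσw]
  obtain ⟨f, hf, hle⟩ := generalCase (fun i => (σx i)⁻¹) (fun i => inv_pos.2 (hσx i))
    (fun i => (σw i)⁻¹) (fun i => inv_pos.2 (hσw i)) A hA
  refine ⟨permMat f, fun i j => ?_, permMat_orth f hf, hle⟩
  by_cases h : f i = j <;> simp [permMat, h]
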